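/- Let S be a discrete p-toral group, and define Z̃ₙ(S) inductively by Z̃₀(S) = 1 and Z̃ₙ(S)/Z̃ₙ₋₁(S) = Ω₁(Z(S/Z̃ₙ₋₁(S))). If α is an automorphism of S of finite order prime to p such that [α, Z̃ₙ(S)] ≤ Z̃ₙ₋₁(S) for each n ≥ 1, then α is the identity. -/

import Mathlib

/-- ℚ/ℤ as an additive group. -/
abbrev QmodZ : Type := ℚ ⧸ AddSubgroup.zmultiples (1 : ℚ)

/-- The Prüfer p-group ℤ/p^∞, realized as the p-primary component of ℚ/ℤ,
written multiplicatively. -/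
def Prufer (p : ℕ) [Fact p.Prime] : Type :=
  Multiplicative (AddCommGroup.primaryComponent QmodZ p)

instance (p : ℕ) [Fact p.Prime] : CommGroup (Prufer p) :=
  Multiplicative.commGroup

/-- A group `S` is *discrete p-toral* if it has a normal subgroup `S₀` isomorphic to a
finite direct product of copies of `ℤ/p^∞` such that `S/S₀` is a finite `p`-group. -/
def IsDiscretePToral (p : ℕ) [Fact p.Prime] (S : Type*) [Group S] : Prop :=
  ∃ S₀ : Subgroup S, ∃ _ : S₀.Normal,
    (∃ r : ℕ, Nonempty (S₀ ≃* (Fin r → Prufer p))) ∧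
    Finite (S ⧸ S₀) ∧ IsPGroup p (S ⧸ S₀)

/-- `Ω₁(Z(G))`: the subgroup of the center of `G` generated by the elements `x`
with `x ^ p = 1`. -/
def omegaOneCenter (p : ℕ) (G : Type*) [Group G] : Subgroup G :=
  Subgroup.closure {x : G | x ∈ Subgroup.center G ∧ x ^ p = 1}

theorem omegaOneCenter_le_center (p : ℕ) (G : Type*) [Group G] :
    omegaOneCenter p G ≤ Subgroup.center G :=
  (Subgroup.closure_le _).2 fun _ hx => hx.1

instance omegaOneCenter_normal (p : ℕ) (G : Type*) [Group G] :
    (omegaOneCenter p G).Normal := by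
  constructor
  intro n hn g
  have hc := Subgroup.mem_center_iff.mp (omegaOneCenter_le_center p G hn) g
  rw [hc, mul_inv_cancel_right]
  exact hn

/-- The ascending chain `Z̃ₙ(S)`: `Z̃₀(S) = 1` and
`Z̃ₙ(S)/Z̃ₙ₋₁(S) = Ω₁(Z(S/Z̃ₙ₋₁(S)))`, packaged with a proof of normality. -/
def ZtilAux (p : ℕ) (S : Type*) [Group S] : ℕ → {H : Subgroup S // H.Normal}
  | 0 => ⟨⊥, inferInstance⟩
  | n + 1 =>
    let Z := ZtilAux p S n
    haveI := Z.2
    ⟨(omegaOneCenter p (S ⧸ Z.1)).comap (QuotientGroup.mk' Z.1),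
      Subgroup.Normal.comap (omegaOneCenter_normal p _) _⟩

/-- `Z̃ₙ(S)`, as a subgroup of `S`. -/
def Ztil (p : ℕ) (S : Type*) [Group S] (n : ℕ) : Subgroup S := (ZtilAux p S n).1

/-!
Let `U = ⋃ₙ Z̃ₙ(S)`. A nontrivial finite normal subgroup of a `p`-group meets `Ω₁` of the center,
and applying this to the quotients `S ⧸ Z̃ₘ(S)` shows that every finite normal subgroup of `S` lies
in `U`. An element of a torsion group with finitely many conjugates has finite normal closure, so
`U` contains the centralizer of every subgroup of finite index. Hence `U` contains the abelian
subgroup `S₀`, so `U` has finite index itself, and therefore `C_S(U) ≤ U`.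

An automorphism `α` of order prime to `p` fixes every `x` for which it fixes `α x * x⁻¹`, because
then `1 = (α x * x⁻¹) ^ orderOf α`. By induction `α` is the identity on each `Z̃ₙ(S)`, hence on `U`;
and `α x * x⁻¹` centralizes the pointwise fixed normal subgroup `U`, so it lies in `U` and is
fixed, for every `x`.
-/

theorem isPGroup_pi {p : ℕ} {ι : Type*} [Finite ι] {G : ι → Type*} [∀ i, Group (G i)]
    (hG : ∀ i, IsPGroup p (G i)) : IsPGroup p (∀ i, G i) := fun x => by
  choose k hk using fun i => isPGroup_iff_orderOf_dvd_pow.1 (hG i) (x i)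
  obtain ⟨m, hm⟩ := Finite.exists_le k
  exact ⟨m, funext fun i => orderOf_dvd_iff_pow_eq_one.1 ((hk i).trans (pow_dvd_pow p (hm i)))⟩

theorem isPGroup_of_normal_of_quotient {p : ℕ} {G : Type*} [Group G] {N : Subgroup G} [N.Normal]
    (hN : IsPGroup p N) (hQ : IsPGroup p (G ⧸ N)) : IsPGroup p G := by
  rw [← QuotientGroup.ker_mk' N] at hN
  exact ((hQ.to_subgroup ⊤).comap_of_ker_isPGroup (QuotientGroup.mk' N) hN).of_equiv
    Subgroup.topEquiv

theorem exists_inf_iSup_le {ι G : Type*} [Preorder ι] [IsDirectedOrder ι] [Nonempty ι] [Group G]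
    {H : ι → Subgroup G} (hH : Monotone H) (K : Subgroup G) [Finite K] :
    ∃ i, K ⊓ ⨆ j, H j ≤ H i := by
  choose k hk using fun x : ↥(K ⊓ ⨆ j, H j) =>
    (Subgroup.mem_iSup_of_directed hH.directed_le).1 x.2.2
  have : Finite ↥(K ⊓ ⨆ j, H j) := Finite.Set.subset K inf_le_left
  obtain ⟨i, hi⟩ := Finite.exists_le k
  exact ⟨i, fun x hx => hH (hi ⟨x, hx⟩) (hk ⟨x, hx⟩)⟩

section FiniteConjugacy

variable {G : Type*} [Group G]

open scoped IsMulCommutative in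
theorem finite_of_fg_of_finiteIndex_center [Group.FG G] [(Subgroup.center G).FiniteIndex]
    (hG : IsMulTorsion G) : Finite G := by
  have hZ : Finite (Subgroup.center G) :=
    CommGroup.finite_of_fg_isMulTorsion _ (hG.subgroup _)
  exact (finite_iff_subgroup_quotient (Subgroup.center G)).2 ⟨hZ, inferInstance⟩

theorem finite_conjugatesOf_of_finiteIndex_centralizer (x : G)
    [hx : (Subgroup.centralizer {x}).FiniteIndex] : (conjugatesOf x).Finite := by
  have horbit : conjugatesOf x = MulAction.orbit (ConjAct G) x :=
    Set.ext fun _ => isConj_comm.trans ConjAct.mem_orbit_conjAct.symm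
  refine Set.finite_of_ncard_ne_zero ?_
  rw [horbit, ← MulAction.index_stabilizer, ConjAct.stabilizer_eq_centralizer]
  exact hx.index_ne_zero

-- Dietzmann's lemma for a single conjugacy class.
theorem finite_normalClosure_of_finiteIndex_centralizer (hG : IsMulTorsion G) (x : G)
    [(Subgroup.centralizer {x}).FiniteIndex] : Finite (Subgroup.normalClosure {x}) := by
  let K := (Subgroup.centralizer {x}).normalCore
  let N := Subgroup.normalClosure {x}
  have hNK : N ≤ Subgroup.centralizer K :=
    Subgroup.normalClosure_le_normal <| Set.singleton_subset_iff.2 fun k hk =>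
      Subgroup.mem_centralizer_singleton_iff.1 (Subgroup.normalCore_le _ hk)
  have : (Subgroup.center N).FiniteIndex :=
    Subgroup.finiteIndex_of_le (H := K.subgroupOf N) fun k hk =>
      Subgroup.mem_center_iff.2 fun n => Subtype.ext (hNK n.2 k hk).symm
  have : Finite (Group.conjugatesOfSet {x}) :=
    (Set.finite_singleton x).biUnion fun y hy =>
      hy ▸ finite_conjugatesOf_of_finiteIndex_centralizer x
  have : Group.FG N := Group.closure_finite_fg _
  exact finite_of_fg_of_finiteIndex_center (hG.subgroup N)

end FiniteConjugacy

section CoprimeAutomorphism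

variable {G : Type*} [Group G]

theorem mulAut_pow_apply_of_fixes_commutator {α : MulAut G} {x : G}
    (hx : α (α x * x⁻¹) = α x * x⁻¹) (k : ℕ) : (α ^ k) x = (α x * x⁻¹) ^ k * x := by
  induction k with
  | zero => simp
  | succ k ih =>
    rw [pow_succ', MulAut.mul_apply, ih, map_mul, map_pow, hx, pow_succ, mul_assoc _ _ x,
      inv_mul_cancel_right]

theorem mulAut_apply_eq_self_of_fixes_commutator {p : ℕ} (hG : IsPGroup p G) {α : MulAut G}
    (hα : (orderOf α).Coprime p) {x : G} (hx : α (α x * x⁻¹) = α x * x⁻¹) : α x = x := by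
  have hpow : (α x * x⁻¹) ^ orderOf α = 1 := by
    simpa using (mulAut_pow_apply_of_fixes_commutator hx (orderOf α)).symm
  have hone : orderOf (α x * x⁻¹) = 1 :=
    (hG.orderOf_coprime hα.symm _).eq_one_of_dvd (orderOf_dvd_of_pow_eq_one hpow)
  exact mul_inv_eq_one.1 (orderOf_eq_one_iff.1 hone)

theorem mulAut_apply_eq_self_of_stable_chain {p : ℕ} (hG : IsPGroup p G) {α : MulAut G}
    (hα : (orderOf α).Coprime p) {H : ℕ → Subgroup G} (hH : H 0 = ⊥)
    (hcomm : ∀ n, ∀ x ∈ H (n + 1), α x * x⁻¹ ∈ H n) (n : ℕ) : ∀ x ∈ H n, α x = x := by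
  induction n with
  | zero =>
    intro x hx
    rw [hH, Subgroup.mem_bot] at hx
    rw [hx, map_one]
  | succ n ih =>
    exact fun x hx => mulAut_apply_eq_self_of_fixes_commutator hG hα (ih _ (hcomm n x hx))

theorem mul_inv_mem_centralizer_of_fixes {F : Type*} [FunLike F G G] [MonoidHomClass F G G]
    {f : F} {U : Subgroup G} [hU : U.Normal] (hfix : ∀ u ∈ U, f u = u) (x : G) :
    f x * x⁻¹ ∈ Subgroup.centralizer U := fun u hu => by
  have hconj : (f x)⁻¹ * u * f x = x⁻¹ * u * x := by
    simpa only [map_mul, map_inv, hfix u hu] using hfix _ (hU.conj_mem' u hu x)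
  calc u * (f x * x⁻¹) = f x * ((f x)⁻¹ * u * f x) * x⁻¹ := by group
    _ = f x * x⁻¹ * u := by rw [hconj]; group

theorem mulAut_eq_one_of_fixes_of_centralizer_le {p : ℕ} (hG : IsPGroup p G) {α : MulAut G}
    (hα : (orderOf α).Coprime p) {U : Subgroup G} [U.Normal]
    (hU : Subgroup.centralizer U ≤ U) (hfix : ∀ u ∈ U, α u = u) : α = 1 :=
  MulEquiv.ext fun x => mulAut_apply_eq_self_of_fixes_commutator hG hα <|
    hfix _ (hU (mul_inv_mem_centralizer_of_fixes hfix x))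

end CoprimeAutomorphism

theorem not_disjoint_omegaOneCenter {p : ℕ} [Fact p.Prime] {G : Type*} [Group G]
    (hG : IsPGroup p G) {N : Subgroup G} [N.Normal] [Finite N] (hN : N ≠ ⊥) :
    ¬Disjoint N (omegaOneCenter p G) := by
  have hdvd : p ∣ Nat.card N :=
    (hG.to_subgroup N).card_eq_or_dvd.resolve_left (mt Subgroup.card_eq_one.1 hN)
  obtain ⟨z, hz, hz1⟩ := (hG.of_equiv ConjAct.toConjAct)
    |>.exists_fixed_point_of_prime_dvd_card_of_fixed_point N hdvd (a := 1) smul_one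
  have hzc : (z : G) ∈ Subgroup.center G := by
    rw [← SetLike.mem_coe, ← ConjAct.fixedPoints_eq_center]
    exact fun g => congrArg Subtype.val (hz g)
  have hzne : (z : G) ≠ 1 := fun h => hz1 (Subtype.ext h.symm)
  have hprime : p.Prime := Fact.out
  have hord : orderOf ((z : G) ^ (orderOf (z : G) / p)) = p :=
    orderOf_pow_orderOf_div (hG.isOfFinOrder hprime.ne_zero _).orderOf_pos.ne' (hG.dvd_orderOf hzne)
  intro hdisj
  have hone := Subgroup.disjoint_def.1 hdisj (pow_mem z.2 _)
    (Subgroup.subset_closure ⟨pow_mem hzc _, orderOf_dvd_iff_pow_eq_one.1 hord.dvd⟩)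
  exact hprime.ne_one (by rw [← hord, hone, orderOf_one])

namespace Ztil

variable {p : ℕ} {S : Type*} [Group S]

instance normal (n : ℕ) : (Ztil p S n).Normal := (ZtilAux p S n).2

theorem mem_succ {n : ℕ} {x : S} :
    x ∈ Ztil p S (n + 1) ↔ (x : S ⧸ Ztil p S n) ∈ omegaOneCenter p (S ⧸ Ztil p S n) := Iff.rfl

theorem monotone : Monotone (Ztil p S) :=
  monotone_nat_of_le_succ fun n x hx => by
    rw [mem_succ, (QuotientGroup.eq_one_iff x).2 hx]
    exact one_mem _

theorem le_iSup_of_finite_of_normal [Fact p.Prime] (hS : IsPGroup p S) (N : Subgroup S)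
    [hN : N.Normal] [Finite N] : N ≤ ⨆ n, Ztil p S n := by
  obtain ⟨m, hm⟩ := exists_inf_iSup_le (monotone (p := p)) N
  let π := QuotientGroup.mk' (Ztil p S m)
  have : Finite (N.map π) := Set.Finite.image π (Set.toFinite (N : Set S))
  have : (N.map π).Normal := hN.map π (QuotientGroup.mk'_surjective _)
  have hdisj : Disjoint (N.map π) (omegaOneCenter p (S ⧸ Ztil p S m)) := by
    rw [Subgroup.disjoint_def]
    rintro _ ⟨x, hxN, rfl⟩ hx
    exact (QuotientGroup.eq_one_iff x).2 <|
      hm ⟨hxN, le_iSup (Ztil p S) (m + 1) (mem_succ.2 hx)⟩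
  have hbot : N.map π = ⊥ := not_imp_not.1 (not_disjoint_omegaOneCenter (hS.to_quotient _)) hdisj
  rw [Subgroup.map_eq_bot_iff, QuotientGroup.ker_mk'] at hbot
  exact hbot.trans (le_iSup _ m)

theorem centralizer_le_iSup [Fact p.Prime] (hS : IsPGroup p S) (H : Subgroup S) [H.FiniteIndex] :
    Subgroup.centralizer H ≤ ⨆ n, Ztil p S n := fun x hx => by
  have : (Subgroup.centralizer {x}).FiniteIndex :=
    Subgroup.finiteIndex_of_le (H := H) fun h hh =>
      Subgroup.mem_centralizer_singleton_iff.2 (hx h hh)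
  have := finite_normalClosure_of_finiteIndex_centralizer
    (fun g => hS.isOfFinOrder (Fact.out : p.Prime).ne_zero g) x
  exact le_iSup_of_finite_of_normal hS (Subgroup.normalClosure {x})
    (Subgroup.subset_normalClosure (Set.mem_singleton x))

theorem finiteIndex_iSup [Fact p.Prime] (hS : IsPGroup p S) (A : Subgroup S) [A.FiniteIndex]
    [IsMulCommutative A] : (⨆ n, Ztil p S n).FiniteIndex :=
  Subgroup.finiteIndex_of_le ((Subgroup.le_centralizer A).trans (centralizer_le_iSup hS A))

end Ztil

theorem Prufer.isPGroup (p : ℕ) [Fact p.Prime] : IsPGroup p (Prufer p) := by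
  rintro ⟨x, k, hk⟩
  exact ⟨k, congrArg Multiplicative.ofAdd (Subtype.ext hk)⟩

namespace IsDiscretePToral

variable {p : ℕ} [Fact p.Prime] {S : Type*} [Group S]

theorem isPGroup (hS : IsDiscretePToral p S) : IsPGroup p S := by
  obtain ⟨S₀, _, ⟨r, ⟨e⟩⟩, _, hQ⟩ := hS
  exact isPGroup_of_normal_of_quotient ((isPGroup_pi fun _ => Prufer.isPGroup p).of_equiv e.symm) hQ

theorem finiteIndex_iSup_Ztil (hS : IsDiscretePToral p S) : (⨆ n, Ztil p S n).FiniteIndex := by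
  have hp := hS.isPGroup
  obtain ⟨S₀, _, ⟨r, ⟨e⟩⟩, _, -⟩ := hS
  have : S₀.FiniteIndex := Subgroup.finiteIndex_of_finite_quotient
  have : IsMulCommutative S₀ := ⟨⟨fun x y => e.injective (by rw [map_mul, map_mul, mul_comm])⟩⟩
  exact Ztil.finiteIndex_iSup hp S₀

end IsDiscretePToral

theorem mulAut_eq_one_of_trivial_on_Ztil_general
    {p : ℕ} [Fact p.Prime] {S : Type*} [Group S] (hS : IsPGroup p S)
    [(⨆ n, Ztil p S n).FiniteIndex] (α : MulAut S) (hcop : Nat.Coprime (orderOf α) p)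
    (hcomm : ∀ n : ℕ, ∀ x ∈ Ztil p S (n + 1), α x * x⁻¹ ∈ Ztil p S n) :
    α = 1 := by
  refine mulAut_eq_one_of_fixes_of_centralizer_le hS hcop
    (Ztil.centralizer_le_iSup hS (⨆ n, Ztil p S n)) fun u hu => ?_
  obtain ⟨n, hn⟩ := (Subgroup.mem_iSup_of_directed Ztil.monotone.directed_le).1 hu
  exact mulAut_apply_eq_self_of_stable_chain hS hcop rfl hcomm n u hn

/-- If `α` is an automorphism of a discrete `p`-toral group `S`, of finite order prime
to `p`, such that `[α, Z̃ₙ(S)] ≤ Z̃ₙ₋₁(S)` for each `n ≥ 1`, then `α` is the identity. -/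
theorem mulAut_eq_one_of_trivial_on_Ztil
    (p : ℕ) [Fact p.Prime] (S : Type*) [Group S] (hS : IsDiscretePToral p S)
    (α : MulAut S) (hfin : IsOfFinOrder α) (hcop : Nat.Coprime (orderOf α) p)
    (hcomm : ∀ n : ℕ, ∀ x ∈ Ztil p S (n + 1), α x * x⁻¹ ∈ Ztil p S n) :
    α = 1 := by
  have := hS.finiteIndex_iSup_Ztil
  exact mulAut_eq_one_of_trivial_on_Ztil_general hS.isPGroup α hcop hcomm
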